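/- Let G=(V,E) be a 3-edge-connected cubic graph, let X ⊂ V be nonempty, let H be a component of G − X, and let f ∈ E(X, V(H)). Then there exists a (possibly trivial, i.e. single-vertex) path P ⊆ H with ends y₀, y₁ such that: P is peripheral in H; there exist distinct edges e₀, e₁ with e_i ∈ E(y_i, X) \ {f} for i = 0, 1; and no internal vertex of P has a neighbor in X. Moreover, if H is 2-edge-connected and y₀ ∈ V(H) is any prescribed vertex with E(y₀, X) \ {f} nonempty, then such a path P can be chosen with y₀ as one of its ends. -/

import Mathlib

open scoped Classical

/-- A multigraph with an orientation: each edge `e` has a source `src e` and a target `tgt e`.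
Loops and parallel edges are allowed. -/
structure Multigraph (V E : Type) where
  src : E → V
  tgt : E → V

namespace Multigraph

variable {V E : Type}

/-- `u` and `v` are joined by some edge satisfying the predicate `P`. -/
def adjVia (G : Multigraph V E) (P : E → Prop) (u v : V) : Prop :=
  ∃ e, P e ∧ ((G.src e = u ∧ G.tgt e = v) ∨ (G.src e = v ∧ G.tgt e = u))

/-- `v` is reachable from `u` using only edges satisfying `P`. -/
def Reaches (G : Multigraph V E) (P : E → Prop) : V → V → Prop :=
  Relation.ReflTransGen (G.adjVia P)

/-- The graph is connected when only edges satisfying `P` are kept (all edges deleted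
whose predicate fails, all vertices kept). -/
def ConnectedVia (G : Multigraph V E) (P : E → Prop) : Prop :=
  Nonempty V ∧ ∀ u v : V, G.Reaches P u v

def Connected (G : Multigraph V E) : Prop :=
  G.ConnectedVia fun _ => True

/-- `G` is `k`-edge-connected: it is connected and has no edge cut of size less than `k`;
equivalently, deleting any set of fewer than `k` edges leaves it connected. -/
def EdgeConnected (G : Multigraph V E) (k : ℕ) : Prop :=
  ∀ S : Set E, S.ncard < k → G.ConnectedVia fun e => e ∉ S

/-- The degree of a vertex (loops counted twice). -/
noncomputable def degree (G : Multigraph V E) (v : V) : ℕ :=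
  {e | G.src e = v}.ncard + {e | G.tgt e = v}.ncard

/-- Every vertex has degree exactly 3. -/
def Cubic (G : Multigraph V E) : Prop :=
  ∀ v : V, G.degree v = 3

/-- `φ : E → Γ` is a flow: at every vertex, the sum over outgoing edges equals the
sum over incoming edges. -/
def IsFlow [Fintype E] {Γ : Type} [AddCommGroup Γ] (G : Multigraph V E) (φ : E → Γ) : Prop :=
  ∀ v : V, (∑ e : E, if G.src e = v then φ e else 0) = ∑ e : E, if G.tgt e = v then φ e else 0

/-- The vertex `v` is an endpoint of some edge of `C`. -/
def touches (G : Multigraph V E) (C : Set E) (v : V) : Prop :=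
  ∃ e ∈ C, G.src e = v ∨ G.tgt e = v

/-- An edge set `C` is (the edge set of) a cycle: it is nonempty, every vertex it touches
has degree exactly 2 in it, and it is connected. -/
def IsCycle (G : Multigraph V E) (C : Set E) : Prop :=
  C.Nonempty ∧
  (∀ v : V, G.touches C v →
    ({e ∈ C | G.src e = v}.ncard + {e ∈ C | G.tgt e = v}.ncard = 2)) ∧
  (∀ u v : V, G.touches C u → G.touches C v → G.Reaches (· ∈ C) u v)

/-- `R` is `k`-closed: every cycle with at least one edge outside `R` has at least
`k+1` edges outside `R`. -/
def Closed (G : Multigraph V E) (k : ℕ) (R : Set E) : Prop :=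
  ∀ C : Set E, G.IsCycle C → (C \ R).Nonempty → k + 1 ≤ (C \ R).ncard

/-- The `k`-closure `⟨S⟩ₖ` of `S` : the minimal `k`-closed set containing `S`
(the family of `k`-closed sets is closed under intersections). -/
def kClosure (G : Multigraph V E) (k : ℕ) (S : Set E) : Set E :=
  ⋂₀ {R : Set E | S ⊆ R ∧ G.Closed k R}

/-- `S` is a `k`-base: its `k`-closure is the whole edge set. -/
def IsBase (G : Multigraph V E) (k : ℕ) (S : Set E) : Prop :=
  G.kClosure k S = Set.univ

/-- An edge set `S` is peripheral if `G − S` is connected. -/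
def Peripheral (G : Multigraph V E) (S : Set E) : Prop :=
  G.ConnectedVia fun e => e ∉ S

/-- The spanning subgraph `(V, F)` is a forest, i.e. contains no cycle. -/
def IsForest (G : Multigraph V E) (F : Set E) : Prop :=
  ∀ C : Set E, G.IsCycle C → ¬ C ⊆ F

/-- `vs`, `es` describe a path: distinct vertices `vs 0, …, vs n` and distinct edges
`es 0, …, es (n-1)` where `es i` joins `vs i` and `vs (i+1)`. -/
def IsPath (G : Multigraph V E) {n : ℕ} (vs : Fin (n + 1) → V) (es : Fin n → E) : Prop :=
  Function.Injective vs ∧ Function.Injective es ∧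
  ∀ i : Fin n,
    (G.src (es i) = vs i.castSucc ∧ G.tgt (es i) = vs i.succ) ∨
    (G.src (es i) = vs i.succ ∧ G.tgt (es i) = vs i.castSucc)

/-- The edge `e` has `y` as one endpoint and its other endpoint in `X`,
i.e. `e ∈ E(y, X)`. -/
def joins (G : Multigraph V E) (e : E) (y : V) (X : Set V) : Prop :=
  (G.src e = y ∧ G.tgt e ∈ X) ∨ (G.tgt e = y ∧ G.src e ∈ X)

/-- `W` is the vertex set of a connected component of `G − X`. -/
def IsComponent (G : Multigraph V E) (X W : Set V) : Prop :=
  W.Nonempty ∧ Disjoint W X ∧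
  (∀ u ∈ W, ∀ v : V, v ∉ X → G.adjVia (fun _ => True) u v → v ∈ W) ∧
  (∀ u ∈ W, ∀ v ∈ W, G.Reaches (fun e => G.src e ∉ X ∧ G.tgt e ∉ X) u v)

/-- The subgraph induced on `W`, with only those of its edges satisfying `P` kept,
is connected. -/
def ConnectedOn (G : Multigraph V E) (W : Set V) (P : E → Prop) : Prop :=
  ∀ u ∈ W, ∀ v ∈ W, G.Reaches (fun e => P e ∧ G.src e ∈ W ∧ G.tgt e ∈ W) u v

/-- The subgraph induced on `W` is `k`-edge-connected. -/
def EdgeConnectedOn (G : Multigraph V E) (W : Set V) (k : ℕ) : Prop :=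
  ∀ S : Set E, S.ncard < k → G.ConnectedOn W fun e => e ∉ S

/-- Some cycle lies entirely inside the vertex set `X`. -/
def HasCycleIn (G : Multigraph V E) (X : Set V) : Prop :=
  ∃ C : Set E, G.IsCycle C ∧ ∀ e ∈ C, G.src e ∈ X ∧ G.tgt e ∈ X

/-- The edge cut `E(X, V \ X)`. -/
def cutEdges (G : Multigraph V E) (X : Set V) : Set E :=
  {e | (G.src e ∈ X ∧ G.tgt e ∉ X) ∨ (G.src e ∉ X ∧ G.tgt e ∈ X)}

/-- A cubic graph is cyclically `k`-edge-connected if every edge cut separating two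
cycle-containing parts has at least `k` edges. -/
def CyclicallyEdgeConnected (G : Multigraph V E) (k : ℕ) : Prop :=
  ∀ X : Set V, G.HasCycleIn X → G.HasCycleIn Xᶜ → k ≤ (G.cutEdges X).ncard

/-- `G` is 3-connected: more than 3 vertices, connected, and still connected after
deleting any two vertices. -/
def ThreeConnected [Fintype V] (G : Multigraph V E) : Prop :=
  3 < Fintype.card V ∧ G.Connected ∧
    ∀ u v : V, G.ConnectedOn {w : V | w ≠ u ∧ w ≠ v} fun _ => True

/-- The graph `G − r` obtained by deleting the vertex `r` and all incident edges. -/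
def deleteVertex (G : Multigraph V E) (r : V) :
    Multigraph {v : V // v ≠ r} {e : E // G.src e ≠ r ∧ G.tgt e ≠ r} where
  src e := ⟨G.src e.1, e.2.1⟩
  tgt e := ⟨G.tgt e.1, e.2.2⟩

end Multigraph

/-!
Suppose first that `H = G[W]` is 2-edge-connected, let `w` be the end of `f` in `W` and let `y` be
the prescribed end; if `y = w`, then `W = {w}` as `G` is cubic. If `y ≠ w`, some walk in `H - w`
leads from `y` to another vertex of attachment, for otherwise only two edges of `G` would leave the
union of `{w}` and the component of `y` in `H - w`. Among the edge sets `S` of `H - w` containing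
such a walk, take one for which the component `B` of `w` in `H - S` is as large as possible. If
`B ≠ W`, let `K` be a component of `H - B`. At least two edges of `H` leave `K`, all of them towards
`B`, and at least three if `K` contains no vertex of attachment, because `G` is 3-edge-connected.
The walk can therefore be rerouted inside `K` so as to avoid one of these edges, and that edge
enlarges `B`, a contradiction. So `H - S` is connected, and a path in `S` up to the first new vertex
of attachment is as required: it avoids `w`, so that `f` is not the edge leaving `W` at its last
vertex.

In general, replace `W` by a minimal `K ⊆ W` with an edge `b` leaving it such that all other edges
leaving `K` leave `W` too and differ from `f`. Such a `K` is 2-edge-connected, and `b` plays the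
role of `f`.
-/

namespace Multigraph

section Reachability

variable {V E : Type} {G : Multigraph V E} {P Q : E → Prop} {A K : Set V} {e : E} {u v : V}

/-- The set `E(A)` of edges with both ends in `A`. -/
def edgesIn (G : Multigraph V E) (A : Set V) : Set E :=
  {e | G.src e ∈ A ∧ G.tgt e ∈ A}

/-- The vertex set of the component of `u` in the spanning subgraph of the edges satisfying `P`. -/
def reachSet (G : Multigraph V E) (P : E → Prop) (u : V) : Set V :=
  {v | G.Reaches P u v}

/-- The vertex set of the component of `u` in `G[A]`. -/
def componentIn (G : Multigraph V E) (A : Set V) (u : V) : Set V :=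
  G.reachSet (· ∈ G.edgesIn A) u

theorem edgesIn_mono {A B : Set V} (h : A ⊆ B) : G.edgesIn A ⊆ G.edgesIn B :=
  fun _ he => ⟨h he.1, h he.2⟩

theorem mem_cutEdges : e ∈ G.cutEdges A ↔ ¬(G.src e ∈ A ↔ G.tgt e ∈ A) := by
  simp only [cutEdges, Set.mem_ofPred_eq]
  tauto

theorem notMem_cutEdges_of_mem_edgesIn (he : e ∈ G.edgesIn A) : e ∉ G.cutEdges A :=
  fun h => mem_cutEdges.1 h (iff_of_true he.1 he.2)

theorem notMem_cutEdges_of_mem_edgesIn_compl (he : e ∈ G.edgesIn Kᶜ) : e ∉ G.cutEdges K :=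
  fun h => mem_cutEdges.1 h (iff_of_false he.1 he.2)

theorem Reaches.of_edge (he : P e) : G.Reaches P (G.src e) (G.tgt e) :=
  .single ⟨e, he, .inl ⟨rfl, rfl⟩⟩

theorem Reaches.symm (h : G.Reaches P u v) : G.Reaches P v u := by
  induction h with
  | refl => exact .refl
  | tail _ hadj ih =>
    obtain ⟨e, he, hends⟩ := hadj
    exact .head ⟨e, he, hends.symm⟩ ih

theorem Reaches.replace_edges (h : G.Reaches P u v)
    (hPQ : ∀ e, P e → G.Reaches Q (G.src e) (G.tgt e)) : G.Reaches Q u v := by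
  induction h with
  | refl => exact .refl
  | tail _ hadj ih =>
    obtain ⟨e, he, ⟨rfl, rfl⟩ | ⟨rfl, rfl⟩⟩ := hadj
    · exact ih.trans (hPQ e he)
    · exact ih.trans (hPQ e he).symm

theorem Reaches.mono (h : G.Reaches P u v) (hPQ : ∀ e, P e → Q e) : G.Reaches Q u v :=
  h.replace_edges fun e he => .of_edge (hPQ e he)

theorem Reaches.restrict (h : G.Reaches P u v) (hu : u ∈ A) (hA : ∀ e, P e → e ∉ G.cutEdges A) :
    v ∈ A ∧ G.Reaches (fun e => P e ∧ e ∈ G.edgesIn A) u v := by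
  induction h with
  | refl => exact ⟨hu, .refl⟩
  | tail _ hadj ih =>
    obtain ⟨e, he, hends⟩ := hadj
    have hiff := not_not.1 (mt mem_cutEdges.2 (hA e he))
    rcases hends with ⟨rfl, rfl⟩ | ⟨rfl, rfl⟩
    · have ht := hiff.1 ih.1
      exact ⟨ht, ih.2.tail ⟨e, ⟨he, ih.1, ht⟩, .inl ⟨rfl, rfl⟩⟩⟩
    · have hs := hiff.2 ih.1
      exact ⟨hs, ih.2.tail ⟨e, ⟨he, hs, ih.1⟩, .inr ⟨rfl, rfl⟩⟩⟩

theorem Reaches.exists_mem_cutEdges (h : G.Reaches P u v) (hu : u ∈ A) (hv : v ∉ A) :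
    ∃ e ∈ G.cutEdges A, P e := by
  by_contra! hA
  exact hv (h.restrict hu fun e he hcut => hA e hcut he).1

theorem Reaches.avoids_or_enters (h : G.Reaches P u v) (hu : u ∉ K) :
    (v ∉ K ∧ G.Reaches (fun e => P e ∧ e ∈ G.edgesIn Kᶜ) u v) ∨
      ∃ k ∈ K, ∃ d ∈ G.edgesIn (insert k Kᶜ),
        G.Reaches (fun e => P e ∧ (e ∈ G.edgesIn Kᶜ ∨ e = d)) u k := by
  induction h with
  | refl => exact .inl ⟨hu, .refl⟩
  | @tail b c _ hadj ih =>
    refine ih.elim ?_ .inr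
    rintro ⟨hb, hub⟩
    obtain ⟨e, he, hends⟩ := hadj
    by_cases hc : c ∈ K
    · refine .inr ⟨c, hc, e, ?_, (hub.mono fun _ h => ⟨h.1, .inl h.2⟩).tail
        ⟨e, ⟨he, .inr rfl⟩, hends⟩⟩
      rcases hends with ⟨rfl, rfl⟩ | ⟨rfl, rfl⟩
      · exact ⟨.inr hb, .inl rfl⟩
      · exact ⟨.inl rfl, .inr hb⟩
    · refine .inl ⟨hc, hub.tail ⟨e, ⟨he, ?_⟩, hends⟩⟩
      rcases hends with ⟨rfl, rfl⟩ | ⟨rfl, rfl⟩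
      · exact ⟨hb, hc⟩
      · exact ⟨hc, hb⟩

theorem notMem_cutEdges_reachSet (he : P e) : e ∉ G.cutEdges (G.reachSet P u) := by
  intro h
  have hends : G.Reaches P (G.src e) (G.tgt e) := .of_edge he
  exact mem_cutEdges.1 h ⟨fun hs => .trans hs hends, fun ht => .trans ht hends.symm⟩

theorem reachSet_subset (hu : u ∈ A) (hA : ∀ e, P e → e ∉ G.cutEdges A) : G.reachSet P u ⊆ A :=
  fun _ hv => (Reaches.restrict hv hu hA).1

theorem connectedOn_reachSet : G.ConnectedOn (G.reachSet P u) P := by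
  intro a ha b hb
  have hab : G.Reaches P a b := .trans (Reaches.symm ha) hb
  exact (hab.restrict ha fun e he => notMem_cutEdges_reachSet he).2

theorem componentIn_subset (hu : u ∈ A) : G.componentIn A u ⊆ A :=
  reachSet_subset hu fun _ he => notMem_cutEdges_of_mem_edgesIn he

theorem connectedOn_componentIn : G.ConnectedOn (G.componentIn A u) fun _ => True :=
  fun a ha b hb => (connectedOn_reachSet a ha b hb).mono fun _ he => ⟨trivial, he.2⟩

end Reachability

section EdgeCuts

variable {V E : Type} {G : Multigraph V E} {P : E → Prop} {A K W X : Set V} {e f : E} {u v : V}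
  {k : ℕ}

/-- The edges of the induced subgraph `G[W]` leaving `A`, i.e. `E(A, W \ A)` when `A ⊆ W`. -/
def innerCut (G : Multigraph V E) (W A : Set V) : Set E :=
  G.cutEdges A ∩ G.edgesIn W

/-- The edges incident with `v`. -/
def incidentEdges (G : Multigraph V E) (v : V) : Set E :=
  {e | G.src e = v ∨ G.tgt e = v}

/-- The set `E(v, V \ W)` of edges from a vertex `v ∈ W` to the outside of `W`. -/
def boundaryAt (G : Multigraph V E) (W : Set V) (v : V) : Set E :=
  G.cutEdges W ∩ G.incidentEdges v

/-- The vertices of attachment of `G[W]`: the vertices of `W` with a neighbour outside `W`. -/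
def attachments (G : Multigraph V E) (W : Set V) : Set V :=
  {v ∈ W | (G.boundaryAt W v).Nonempty}

theorem notMem_cutEdges_or_notMem_cutEdges_diff (hAK : A ⊆ K) (he : e ∈ G.cutEdges K) :
    e ∉ G.cutEdges A ∨ e ∉ G.cutEdges (K \ A) := by
  have hs := @hAK (G.src e)
  have ht := @hAK (G.tgt e)
  simp only [mem_cutEdges, Set.mem_sdiff] at he ⊢
  tauto

theorem ne_univ_of_mem_cutEdges (he : e ∈ G.cutEdges A) : A ≠ Set.univ := by
  rintro rfl
  exact mem_cutEdges.1 he (iff_of_true trivial trivial)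

theorem cutEdges_singleton_subset : G.cutEdges {v} ⊆ G.incidentEdges v := by
  rintro e (⟨hs, -⟩ | ⟨-, ht⟩)
  · exact .inl hs
  · exact .inr ht

theorem cutEdges_insert_subset (hv : v ∉ A) :
    G.cutEdges (insert v A) ⊆ symmDiff (G.incidentEdges v) (G.cutEdges A) := by
  intro e he
  have hs : G.src e = v → G.src e ∉ A := fun h => h ▸ hv
  have ht : G.tgt e = v → G.tgt e ∉ A := fun h => h ▸ hv
  simp only [mem_cutEdges, incidentEdges, Set.mem_symmDiff, Set.mem_insert_iff,
    Set.mem_ofPred_eq] at he ⊢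
  tauto

theorem innerCut_diff : G.innerCut W (W \ A) = G.innerCut W A := by
  ext e
  simp only [innerCut, edgesIn, mem_cutEdges, Set.mem_inter_iff, Set.mem_ofPred_eq, Set.mem_sdiff]
  tauto

theorem cutEdges_subset_innerCut_union (hAW : A ⊆ W) :
    G.cutEdges A ⊆ G.innerCut W A ∪ G.cutEdges W := by
  intro e he
  have hs := @hAW (G.src e)
  have ht := @hAW (G.tgt e)
  simp only [innerCut, edgesIn, mem_cutEdges, Set.mem_union, Set.mem_inter_iff,
    Set.mem_ofPred_eq] at he ⊢
  tauto

theorem exists_mem_boundaryAt (hAW : A ⊆ W) (he : e ∈ G.cutEdges A) (heW : e ∉ G.edgesIn W) :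
    ∃ v ∈ A, e ∈ G.boundaryAt W v := by
  have heW' : e ∈ G.cutEdges W :=
    (cutEdges_subset_innerCut_union hAW he).resolve_left fun h => heW h.2
  rcases he with ⟨hs, -⟩ | ⟨-, ht⟩
  · exact ⟨_, hs, heW', .inl rfl⟩
  · exact ⟨_, ht, heW', .inr rfl⟩

theorem exists_mem_boundaryAt_of_mem_cutEdges (he : e ∈ G.cutEdges W) :
    ∃ v ∈ W, e ∈ G.boundaryAt W v :=
  exists_mem_boundaryAt subset_rfl he fun h => notMem_cutEdges_of_mem_edgesIn h he

theorem innerCut_componentIn_sdiff_subset (hu : u ∈ W \ A) :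
    G.innerCut W (G.componentIn (W \ A) u) ⊆ G.cutEdges A := by
  rintro e ⟨hcut, hs, ht⟩
  by_contra heA
  have hends := not_not.1 (mt mem_cutEdges.2 heA)
  by_cases hsA : G.src e ∈ A
  · exact mem_cutEdges.1 hcut (iff_of_false (fun h => (componentIn_subset hu h).2 hsA)
      fun h => (componentIn_subset hu h).2 (hends.1 hsA))
  · exact notMem_cutEdges_reachSet (P := (· ∈ G.edgesIn (W \ A)))
      ⟨⟨hs, hsA⟩, ht, fun htA => hsA (hends.2 htA)⟩ hcut

theorem cutEdges_eq_innerCut_of_disjoint (hAW : A ⊆ W) (hA : Disjoint A (G.attachments W)) :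
    G.cutEdges A = G.innerCut W A := by
  refine (Set.inter_eq_left.2 fun e he => ?_).symm
  by_contra heW
  obtain ⟨v, hv, hev⟩ := exists_mem_boundaryAt hAW he heW
  exact Set.disjoint_left.1 hA hv ⟨hAW hv, e, hev⟩

theorem boundaryAt_subset (hKW : K ⊆ W) (hv : v ∈ K) : G.boundaryAt W v ⊆ G.boundaryAt K v := by
  rintro e ⟨⟨-, ht⟩ | ⟨hs, -⟩, rfl | rfl⟩
  · exact ⟨.inl ⟨hv, fun h => ht (hKW h)⟩, .inl rfl⟩
  · exact absurd (hKW hv) ht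
  · exact absurd (hKW hv) hs
  · exact ⟨.inr ⟨fun h => hs (hKW h), hv⟩, .inr rfl⟩

theorem eq_of_mem_boundaryAt (hu : u ∈ W) (hv : v ∈ W) (heu : e ∈ G.boundaryAt W u)
    (hev : e ∈ G.boundaryAt W v) : u = v := by
  obtain ⟨hcut, rfl | rfl⟩ := heu <;> obtain ⟨-, rfl | rfl⟩ := hev
  · rfl
  · exact absurd (iff_of_true hu hv) (mem_cutEdges.1 hcut)
  · exact absurd (iff_of_true hv hu) (mem_cutEdges.1 hcut)
  · rfl

theorem ConnectedOn.exists_mem_innerCut (h : G.ConnectedOn W P) (hAW : A ⊂ W) (hA : A.Nonempty) :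
    ∃ e ∈ G.innerCut W A, P e := by
  obtain ⟨u, hu⟩ := hA
  obtain ⟨v, hv, hvA⟩ := Set.exists_of_ssubset hAW
  obtain ⟨e, he, hP, heW⟩ := (h u (hAW.subset hu) v hv).exists_mem_cutEdges hu hvA
  exact ⟨e, ⟨he, heW⟩, hP⟩

theorem Connected.nonempty_cutEdges (hG : G.Connected) (hA : A.Nonempty) (hA' : A ≠ Set.univ) :
    (G.cutEdges A).Nonempty := by
  obtain ⟨u, hu⟩ := hA
  obtain ⟨v, hv⟩ := (Set.ne_univ_iff_exists_notMem A).1 hA'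
  obtain ⟨e, he, -⟩ := (hG.2 u v).exists_mem_cutEdges hu hv
  exact ⟨e, he⟩

theorem EdgeConnected.connected (hG : G.EdgeConnected k) (hk : 0 < k) : G.Connected := by
  obtain ⟨hV, hreach⟩ := hG ∅ (by rwa [Set.ncard_empty])
  exact ⟨hV, fun u v => (hreach u v).mono fun _ _ => trivial⟩

theorem EdgeConnected.le_ncard_cutEdges (hG : G.EdgeConnected k) (hA : A.Nonempty)
    (hA' : A ≠ Set.univ) : k ≤ (G.cutEdges A).ncard := by
  by_contra! hlt
  obtain ⟨u, hu⟩ := hA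
  obtain ⟨v, hv⟩ := (Set.ne_univ_iff_exists_notMem A).1 hA'
  obtain ⟨e, he, hne⟩ := ((hG _ hlt).2 u v).exists_mem_cutEdges hu hv
  exact hne he

theorem edgeConnectedOn_iff_le_ncard_innerCut [Finite E] :
    G.EdgeConnectedOn W k ↔ ∀ A ⊂ W, A.Nonempty → k ≤ (G.innerCut W A).ncard := by
  refine ⟨fun h A hAW hA => ?_, fun h S hS u hu v hv => ?_⟩
  · by_contra! hlt
    obtain ⟨e, he, hne⟩ := (h _ hlt).exists_mem_innerCut hAW hA
    exact hne he
  · by_contra hnot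
    let R := G.reachSet (fun e => e ∉ S ∧ e ∈ G.edgesIn W) u
    have hRW : R ⊂ W :=
      (reachSet_subset hu fun e he => notMem_cutEdges_of_mem_edgesIn he.2).ssubset_of_ne
        fun h => hnot (h.ge hv)
    have hRS : G.innerCut W R ⊆ S := by
      rintro e ⟨hcut, heW⟩
      by_contra heS
      exact notMem_cutEdges_reachSet (P := fun e => e ∉ S ∧ e ∈ G.edgesIn W) ⟨heS, heW⟩ hcut
    exact absurd (h R hRW ⟨u, .refl⟩) (not_le.2 ((Set.ncard_le_ncard hRS).trans_lt hS))

theorem Cubic.ncard_incidentEdges_le (h : G.Cubic) (v : V) : (G.incidentEdges v).ncard ≤ 3 := by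
  rw [← h v, degree, incidentEdges, Set.ofPred_or]
  exact Set.ncard_union_le _ _

theorem EdgeConnectedOn.insert_innerCut_eq_incidentEdges [Finite E] (h : G.EdgeConnectedOn W 2)
    (hcubic : G.Cubic) (hf : f ∈ G.boundaryAt W v) (hAW : A ⊂ W) (hA : A.Nonempty)
    (hsub : G.innerCut W A ⊆ G.incidentEdges v) :
    insert f (G.innerCut W A) = G.incidentEdges v := by
  refine Set.eq_of_subset_of_ncard_le (Set.insert_subset hf.2 hsub) ?_
  rw [Set.ncard_insert_of_notMem fun hfA => notMem_cutEdges_of_mem_edgesIn hfA.2 hf.1]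
  have htwo := edgeConnectedOn_iff_le_ncard_innerCut.1 h A hAW hA
  exact (hcubic.ncard_incidentEdges_le v).trans (by omega)

theorem EdgeConnectedOn.subsingleton_boundaryAt [Finite E] (h : G.EdgeConnectedOn W 2)
    (hcubic : G.Cubic) (hv : {v} ⊂ W) : (G.boundaryAt W v).Subsingleton := by
  have eq_insert (e : E) (he : e ∈ G.boundaryAt W v) :=
    h.insert_innerCut_eq_incidentEdges hcubic he hv (Set.singleton_nonempty v)
      (Set.inter_subset_left.trans cutEdges_singleton_subset)
  intro e he e' he'
  exact ((eq_insert e' he').ge he.2).resolve_right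
    fun h => notMem_cutEdges_of_mem_edgesIn h.2 he.1

theorem IsComponent.joins_iff (hW : G.IsComponent X W) (hv : v ∈ W) :
    G.joins e v X ↔ e ∈ G.boundaryAt W v := by
  obtain ⟨-, hdisj, hclosed, -⟩ := hW
  have hadj : ∀ u ∉ W, G.adjVia (fun _ => True) v u → u ∈ X := fun u hu huv => by
    by_contra huX
    exact hu (hclosed v hv u huX huv)
  have hXW : ∀ x ∈ X, x ∉ W := fun x hx hxW => Set.disjoint_left.1 hdisj hxW hx
  constructor
  · rintro (⟨rfl, ht⟩ | ⟨rfl, hs⟩)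
    · exact ⟨.inl ⟨hv, hXW _ ht⟩, .inl rfl⟩
    · exact ⟨.inr ⟨hXW _ hs, hv⟩, .inr rfl⟩
  · rintro ⟨hcut, rfl | rfl⟩
    · have ht : G.tgt e ∉ W := fun ht => mem_cutEdges.1 hcut (iff_of_true hv ht)
      exact .inl ⟨rfl, hadj _ ht ⟨e, trivial, .inl ⟨rfl, rfl⟩⟩⟩
    · have hs : G.src e ∉ W := fun hs => mem_cutEdges.1 hcut (iff_of_true hs hv)
      exact .inr ⟨rfl, hadj _ hs ⟨e, trivial, .inr ⟨rfl, rfl⟩⟩⟩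

theorem IsComponent.connectedOn (hW : G.IsComponent X W) : G.ConnectedOn W fun _ => True := by
  obtain ⟨-, -, hclosed, hreach⟩ := hW
  intro u hu v hv
  refine Reaches.mono ((hreach u hu v hv).restrict hu ?_).2 fun e he => ⟨trivial, he.2⟩
  rintro e ⟨hs, ht⟩ (⟨hsW, htW⟩ | ⟨hsW, htW⟩)
  · exact htW (hclosed _ hsW _ ht ⟨e, trivial, .inl ⟨rfl, rfl⟩⟩)
  · exact hsW (hclosed _ htW _ hs ⟨e, trivial, .inr ⟨rfl, rfl⟩⟩)

end EdgeCuts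

section Paths

variable {V E : Type} {G : Multigraph V E} {P : E → Prop} {S S' : Set E} {T W : Set V} {u v y : V}

theorem isPath_of_injective {n : ℕ} {vs : Fin (n + 1) → V} {es : Fin n → E}
    (hvs : Function.Injective vs)
    (hes : ∀ i, s(G.src (es i), G.tgt (es i)) = s(vs i.castSucc, vs i.succ)) :
    G.IsPath vs es := by
  refine ⟨hvs, fun i j hij => ?_, fun i => Sym2.eq_iff.1 (hes i)⟩
  have hends : s(vs i.castSucc, vs i.succ) = s(vs j.castSucc, vs j.succ) := by
    rw [← hes i, ← hes j, hij]
  rcases Sym2.eq_iff.1 hends with ⟨h, -⟩ | ⟨h, h'⟩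
  · exact Fin.castSucc_injective n (hvs h)
  · have h₁ := congrArg Fin.val (hvs h)
    have h₂ := congrArg Fin.val (hvs h')
    simp only [Fin.val_castSucc, Fin.val_succ] at h₁ h₂
    omega

theorem IsPath.mem_edgesIn {n : ℕ} {vs : Fin (n + 1) → V} {es : Fin n → E}
    (h : G.IsPath vs es) (hW : ∀ i, vs i ∈ W) (i : Fin n) : es i ∈ G.edgesIn W := by
  rcases h.2.2 i with ⟨hs, ht⟩ | ⟨hs, ht⟩ <;> exact ⟨hs ▸ hW _, ht ▸ hW _⟩

theorem IsPath.mem_of_edgesIn {n : ℕ} {vs : Fin (n + 1) → V} {es : Fin n → E}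
    (h : G.IsPath vs es) (h₀ : vs 0 ∈ W) (hW : ∀ i, es i ∈ G.edgesIn W) (i : Fin (n + 1)) :
    vs i ∈ W := by
  refine Fin.cases h₀ (fun j => ?_) i
  rcases h.2.2 j with ⟨-, ht⟩ | ⟨hs, -⟩
  · exact ht ▸ (hW j).2
  · exact hs ▸ (hW j).1

theorem Reaches.exists_isPath (h : G.Reaches P u v) :
    ∃ (n : ℕ) (vs : Fin (n + 1) → V) (es : Fin n → E),
      G.IsPath vs es ∧ vs 0 = u ∧ vs (Fin.last n) = v ∧ ∀ i, P (es i) := by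
  let H : SimpleGraph V := SimpleGraph.fromRel (G.adjVia P)
  have hreach : H.Reachable u v := by
    induction h with
    | refl => exact .refl _
    | @tail b c _ hbc ih =>
      by_cases hne : b = c
      · exact hne ▸ ih
      · exact ih.trans (SimpleGraph.Adj.reachable (G := H) ⟨hne, .inl hbc⟩)
  obtain ⟨p, hp⟩ := hreach.exists_isPath
  have hedge (i : Fin p.length) :
      ∃ e, P e ∧ s(G.src e, G.tgt e) = s(p.getVert i, p.getVert (i + 1)) := by
    obtain ⟨-, ⟨e, he, hends⟩ | ⟨e, he, hends⟩⟩ := p.adj_getVert_succ i.2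
    · exact ⟨e, he, Sym2.eq_iff.2 hends⟩
    · exact ⟨e, he, Sym2.eq_iff.2 hends.symm⟩
  choose es hP hes using hedge
  refine ⟨p.length, fun i => p.getVert i, es, isPath_of_injective (fun i j hij => ?_) hes,
    p.getVert_zero, p.getVert_length, hP⟩
  exact Fin.ext (hp.getVert_injOn (Nat.lt_succ_iff.1 i.2) (Nat.lt_succ_iff.1 j.2) hij)

/-- The edge set `S` contains a walk from `y` to a vertex of `T` other than `y`. -/
def Links (G : Multigraph V E) (S : Set E) (y : V) (T : Set V) : Prop :=
  ∃ t ∈ T, t ≠ y ∧ G.Reaches (· ∈ S) y t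

theorem Links.mono (h : G.Links S y T) (hS : S ⊆ S') : G.Links S' y T :=
  let ⟨t, ht, hty, hreach⟩ := h
  ⟨t, ht, hty, hreach.mono fun _ he => hS he⟩

theorem Links.exists_isPath (h : G.Links S y T) :
    ∃ (n : ℕ) (vs : Fin (n + 1) → V) (es : Fin n → E),
      G.IsPath vs es ∧ vs 0 = y ∧ (∀ i, es i ∈ S) ∧
      vs (Fin.last n) ∈ T ∧ vs (Fin.last n) ≠ y ∧
      ∀ i, i ≠ 0 → i ≠ Fin.last n → vs i ∉ T := by
  obtain ⟨t, ht, hty, hreach⟩ := h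
  obtain ⟨htT, -⟩ | ⟨k, hk, d, hd, hyk⟩ :=
    hreach.avoids_or_enters (K := T \ {y}) fun hy => hy.2 rfl
  · exact absurd ⟨ht, hty⟩ htT
  obtain ⟨n, vs, es, hpath, rfl, rfl, hes⟩ := hyk.exists_isPath
  refine ⟨n, vs, es, hpath, rfl, fun i => (hes i).1, hk.1, hk.2, fun i hi₀ hil hiT => ?_⟩
  have hmem : vs i ∈ insert (vs (Fin.last n)) (T \ {vs 0})ᶜ := by
    refine hpath.mem_of_edgesIn (.inr fun h => h.2 rfl) (fun j => ?_) i
    obtain ⟨-, hj | rfl⟩ := hes j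
    · exact edgesIn_mono (Set.subset_insert _ _) hj
    · exact hd
  rcases hmem with hlast | hout
  · exact hil (hpath.1 hlast)
  · exact hout ⟨hiT, fun h => hi₀ (hpath.1 h)⟩

end Paths

section Rerouting

variable {V E : Type} {G : Multigraph V E} {S C : Set E} {T K : Set V} {a b y : V}

theorem Reaches.avoids_or_enters_through_subsingleton (h : G.Reaches (· ∈ S) a b) (K : Set V) :
    G.Reaches (· ∈ S \ G.cutEdges K) a b ∨
      ∃ D : Set E, D.Subsingleton ∧ (a ∈ K → D = ∅) ∧
        ∃ k ∈ K, G.Reaches (· ∈ S \ (G.cutEdges K \ D)) a k := by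
  by_cases ha : a ∈ K
  · exact .inr ⟨∅, Set.subsingleton_empty, fun _ => rfl, a, ha, .refl⟩
  refine (h.avoids_or_enters ha).imp (fun h => ?_) ?_
  · exact h.2.mono fun e he => ⟨he.1, notMem_cutEdges_of_mem_edgesIn_compl he.2⟩
  · rintro ⟨k, hk, d, -, hak⟩
    refine ⟨{d}, Set.subsingleton_singleton, fun h => absurd h ha, k, hk, hak.mono ?_⟩
    rintro e ⟨heS, heK | rfl⟩
    · exact ⟨heS, fun h => notMem_cutEdges_of_mem_edgesIn_compl heK h.1⟩
    · exact ⟨heS, fun h => h.2 rfl⟩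

-- A walk detoured through `K` uses at most one edge of the cut to enter `K` and one to leave it;
-- it need not leave `K` if it finds a vertex of `T` there, nor enter `K` if it starts there.
theorem Links.exists_few_cutEdges [Finite E] (h : G.Links S y T)
    (hK : G.ConnectedOn K fun _ => True) :
    ∃ D : Set E, D.ncard ≤ 2 ∧ (¬Disjoint K T → D.ncard ≤ 1) ∧
      G.Links ((S ∪ G.edgesIn K) \ (G.cutEdges K \ D)) y T := by
  have inside (D : Set E) {u v : V} (hu : u ∈ K) (hv : v ∈ K) :
      G.Reaches (· ∈ (S ∪ G.edgesIn K) \ (G.cutEdges K \ D)) u v :=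
    (hK u hu v hv).mono fun e he => ⟨.inr he.2, fun h => notMem_cutEdges_of_mem_edgesIn he.2 h.1⟩
  have widen {D D' : Set E} (hD : D ⊆ D') :
      S \ (G.cutEdges K \ D) ⊆ (S ∪ G.edgesIn K) \ (G.cutEdges K \ D') :=
    Set.sdiff_subset_sdiff Set.subset_union_left (Set.sdiff_subset_sdiff_right hD)
  have avoiding : S \ G.cutEdges K ⊆ (S ∪ G.edgesIn K) \ (G.cutEdges K \ ∅) :=
    Set.sdiff_subset_sdiff Set.subset_union_left Set.sdiff_subset
  obtain ⟨t, ht, hty, hyt⟩ := h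
  obtain havoid | ⟨D₀, hD₀, hyD₀, k₀, hk₀, hy⟩ := hyt.avoids_or_enters_through_subsingleton K
  · exact ⟨∅, by simp, by simp, t, ht, hty, havoid.mono avoiding⟩
  obtain havoid | ⟨D₁, hD₁, -, k₁, hk₁, ht₁⟩ := hyt.symm.avoids_or_enters_through_subsingleton K
  · exact ⟨∅, by simp, by simp, t, ht, hty, havoid.symm.mono avoiding⟩
  replace hD₀ := Set.ncard_le_one_iff_subsingleton.2 hD₀
  replace hD₁ := Set.ncard_le_one_iff_subsingleton.2 hD₁
  by_cases hKT : ∃ s ∈ K, s ∈ T ∧ s ≠ y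
  · obtain ⟨s, hsK, hsT, hsy⟩ := hKT
    exact ⟨D₀, by omega, fun _ => hD₀, s, hsT, hsy,
      .trans (hy.mono (widen subset_rfl)) (inside D₀ hk₀ hsK)⟩
  · refine ⟨D₀ ∪ D₁, (Set.ncard_union_le _ _).trans (by omega), fun hmeet => ?_, t, ht, hty,
      .trans (hy.mono (widen Set.subset_union_left))
        (.trans (inside _ hk₀ hk₁) (ht₁.symm.mono (widen Set.subset_union_right)))⟩
    obtain ⟨s, hsK, hsT⟩ := Set.not_disjoint_iff.1 hmeet
    have hyK : y ∈ K := by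
      by_contra hyK
      exact hKT ⟨s, hsK, hsT, fun h => hyK (h ▸ hsK)⟩
    rwa [hyD₀ hyK, Set.empty_union]

theorem Links.exists_links_diff_singleton [Finite E] (h : G.Links S y T)
    (hK : G.ConnectedOn K fun _ => True) (hC : C ⊆ G.cutEdges K) (htwo : 2 ≤ C.ncard)
    (hthree : Disjoint K T → 3 ≤ C.ncard) :
    ∃ d ∈ C, G.Links ((S ∪ G.edgesIn K) \ {d}) y T := by
  obtain ⟨D, hDtwo, hDone, hlinks⟩ := h.exists_few_cutEdges hK
  have hcard : D.ncard < C.ncard := by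
    by_cases hKT : Disjoint K T
    · exact hDtwo.trans_lt (hthree hKT)
    · exact (hDone hKT).trans_lt htwo
  obtain ⟨d, hd, hdD⟩ := Set.exists_mem_notMem_of_ncard_lt_ncard hcard
  exact ⟨d, hd, hlinks.mono
    (Set.sdiff_subset_sdiff_right (Set.singleton_subset_iff.2 ⟨hC hd, hdD⟩))⟩

end Rerouting

section PeripheralPaths

variable {V E : Type} {G : Multigraph V E} {S : Set E} {K W X : Set V} {b e₀ f : E} {w y : V}

/-- The vertex set of the component of `G[W] - S` containing `w`. -/
def residualComponent (G : Multigraph V E) (W : Set V) (S : Set E) (w : V) : Set V :=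
  G.reachSet (fun e => e ∉ S ∧ e ∈ G.edgesIn W) w

theorem EdgeConnectedOn.links_edgesIn_diff_singleton [Finite E] (h : G.EdgeConnectedOn W 2)
    (hG : G.EdgeConnected 3) (hcubic : G.Cubic) (hW : W ≠ Set.univ) (hw : w ∈ W)
    (hf : f ∈ G.boundaryAt W w) (hy : y ∈ W) (he₀ : e₀ ∈ G.boundaryAt W y) (hyw : y ≠ w) :
    G.Links (G.edgesIn (W \ {w})) y (G.attachments W) := by
  by_contra hno
  let K := G.componentIn (W \ {w}) y
  have hyK : y ∈ K := .refl
  have hKw : K ⊆ W \ {w} := componentIn_subset ⟨hy, hyw⟩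
  have hwK : w ∉ K := fun h => (hKw h).2 rfl
  have hKW : K ⊂ W := (hKw.trans Set.sdiff_subset).ssubset_of_mem_notMem hw hwK
  have honly (v : V) (hv : v ∈ K) (hvT : v ∈ G.attachments W) : v = y := by
    by_contra hne
    exact hno ⟨v, hvT, hne, hv⟩
  have hinner : G.innerCut W K ⊆ G.incidentEdges w :=
    (innerCut_componentIn_sdiff_subset ⟨hy, hyw⟩).trans cutEdges_singleton_subset
  have hincident := h.insert_innerCut_eq_incidentEdges hcubic hf hKW ⟨y, hyK⟩ hinner
  have hcut : G.cutEdges (insert w K) ⊆ {e₀, f} := by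
    intro e he
    obtain ⟨hew, heK⟩ | ⟨heK, hew⟩ := cutEdges_insert_subset hwK he
    · exact .inr ((hincident.ge hew).resolve_right fun h => heK h.1)
    · obtain ⟨v, hvK, hev⟩ := exists_mem_boundaryAt hKW.subset heK
        fun heW => hew (hinner ⟨heK, heW⟩)
      obtain rfl := honly v hvK ⟨hKW.subset hvK, e, hev⟩
      exact .inl (h.subsingleton_boundaryAt hcubic
        ((Set.singleton_subset_iff.2 hy).ssubset_of_mem_notMem hw hyw.symm) hev he₀)
  have hthree := hG.le_ncard_cutEdges (Set.insert_nonempty w K) fun huniv =>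
    hW (Set.univ_subset_iff.1 (huniv.ge.trans (Set.insert_subset hw hKW.subset)))
  have htwo := (Set.ncard_le_ncard hcut).trans (Set.ncard_insert_le e₀ {f})
  rw [Set.ncard_singleton] at htwo
  omega

theorem exists_residualComponent_ssubset [Finite E] (hG : G.EdgeConnected 3)
    (h : G.EdgeConnectedOn W 2) (hw : w ∈ W) (hSw : S ⊆ G.edgesIn (W \ {w}))
    (hS : G.Links S y (G.attachments W)) (hne : G.residualComponent W S w ≠ W) :
    ∃ S' ⊆ G.edgesIn (W \ {w}), G.Links S' y (G.attachments W) ∧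
      G.residualComponent W S w ⊂ G.residualComponent W S' w := by
  let B := G.residualComponent W S w
  have hwB : w ∈ B := .refl
  have hBW : B ⊆ W := reachSet_subset hw fun e he => notMem_cutEdges_of_mem_edgesIn he.2
  obtain ⟨u, huW, huB⟩ := Set.exists_of_ssubset (hBW.ssubset_of_ne hne)
  let K := G.componentIn (W \ B) u
  have huK : u ∈ K := .refl
  have hKB : K ⊆ W \ B := componentIn_subset ⟨huW, huB⟩
  have hKW : K ⊂ W :=
    (hKB.trans Set.sdiff_subset).ssubset_of_mem_notMem hw fun h => (hKB h).2 hwB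
  have htwo := edgeConnectedOn_iff_le_ncard_innerCut.1 h K hKW ⟨u, huK⟩
  have hthree (hdisj : Disjoint K (G.attachments W)) : 3 ≤ (G.innerCut W K).ncard := by
    rw [← cutEdges_eq_innerCut_of_disjoint hKW.subset hdisj]
    exact hG.le_ncard_cutEdges ⟨u, huK⟩ (hKW.trans_subset (Set.subset_univ W)).ne
  obtain ⟨d, hd, hlinks⟩ :=
    hS.exists_links_diff_singleton connectedOn_componentIn Set.inter_subset_left htwo hthree
  have hKw : K ⊆ W \ {w} := fun v hv => ⟨(hKB hv).1, fun h => (hKB hv).2 (h ▸ hwB)⟩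
  let S' := (S ∪ G.edgesIn K) \ {d}
  have hBB' : B ⊆ G.residualComponent W S' w := fun v hv =>
    (connectedOn_reachSet w hwB v hv).mono fun e ⟨he, hs, _⟩ =>
      ⟨fun heS' => heS'.1.elim he.1 fun heK => (hKB heK.1).2 hs, he.2⟩
  have hdB : d ∈ G.cutEdges B := innerCut_componentIn_sdiff_subset ⟨huW, huB⟩ hd
  have hdB' : d ∉ G.cutEdges (G.residualComponent W S' w) :=
    notMem_cutEdges_reachSet ⟨fun h => h.2 rfl, hd.2⟩
  refine ⟨S', Set.sdiff_subset.trans (Set.union_subset hSw (edgesIn_mono hKw)), hlinks, ?_⟩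
  exact hBB'.ssubset_of_ne fun heq => hdB' (heq ▸ hdB)

theorem EdgeConnectedOn.exists_links_connectedOn [Finite V] [Finite E]
    (h : G.EdgeConnectedOn W 2) (hG : G.EdgeConnected 3) (hcubic : G.Cubic) (hW : W ≠ Set.univ)
    (hw : w ∈ W) (hf : f ∈ G.boundaryAt W w) (hy : y ∈ W) (he₀ : e₀ ∈ G.boundaryAt W y)
    (hyw : y ≠ w) :
    ∃ S ⊆ G.edgesIn (W \ {w}), G.Links S y (G.attachments W) ∧ G.ConnectedOn W (· ∉ S) := by
  obtain ⟨S, ⟨hSw, hS⟩, hmax⟩ := exists_maximalFor_of_wellFoundedGT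
    (fun S => S ⊆ G.edgesIn (W \ {w}) ∧ G.Links S y (G.attachments W))
    (G.residualComponent W · w)
    ⟨_, subset_rfl, h.links_edgesIn_diff_singleton hG hcubic hW hw hf hy he₀ hyw⟩
  have hspan : G.residualComponent W S w = W := by
    by_contra hne
    obtain ⟨S', hSw', hS', hlt⟩ := exists_residualComponent_ssubset hG h hw hSw hS hne
    exact hlt.not_subset (hmax ⟨hSw', hS'⟩ hlt.subset)
  refine ⟨S, hSw, hS, fun u hu v hv => ?_⟩
  exact .trans (Reaches.symm (hspan.ge hu)) (hspan.ge hv)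

/-- `vs`, `es` is a peripheral path of `H = G[W]` whose ends have distinct edges other than `f`
leaving `W`, and whose internal vertices have no neighbour outside `W`. -/
structure IsPeripheralPath (G : Multigraph V E) (W : Set V) (f : E) {n : ℕ}
    (vs : Fin (n + 1) → V) (es : Fin n → E) : Prop where
  isPath : G.IsPath vs es
  mem (i : Fin (n + 1)) : vs i ∈ W
  connectedOn : G.ConnectedOn W (· ∉ Set.range es)
  exists_boundary_edges : ∃ e₀ ∈ G.boundaryAt W (vs 0), ∃ e₁ ∈ G.boundaryAt W (vs (Fin.last n)),
    e₀ ≠ e₁ ∧ e₀ ≠ f ∧ e₁ ≠ f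
  notMem_attachments (i : Fin (n + 1)) : i ≠ 0 → i ≠ Fin.last n → vs i ∉ G.attachments W

theorem isPeripheralPath_singleton [Finite E] (hcut : 3 ≤ (G.cutEdges {y}).ncard)
    (he₀ : e₀ ∈ G.boundaryAt {y} y) (hne : e₀ ≠ f) :
    G.IsPeripheralPath {y} f (n := 0) (fun _ => y) Fin.elim0 where
  isPath := ⟨fun i j _ => Subsingleton.elim (α := Fin 1) i j, fun i => i.elim0, fun i => i.elim0⟩
  mem _ := rfl
  connectedOn := by
    rintro _ rfl _ rfl
    exact .refl
  exists_boundary_edges := by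
    have hlt : ({e₀, f} : Set E).ncard < (G.cutEdges {y}).ncard := by
      rw [Set.ncard_pair hne]
      omega
    obtain ⟨e₁, he₁, hnot⟩ := Set.exists_mem_notMem_of_ncard_lt_ncard hlt
    obtain ⟨_, rfl, he₁y⟩ := exists_mem_boundaryAt_of_mem_cutEdges he₁
    exact ⟨e₀, he₀, e₁, he₁y, fun h => hnot (.inl h.symm), hne, fun h => hnot (.inr h)⟩
  notMem_attachments i hi _ := absurd (Subsingleton.elim (α := Fin 1) i 0) hi

theorem EdgeConnectedOn.exists_isPeripheralPath [Finite V] [Finite E]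
    (h : G.EdgeConnectedOn W 2) (hG : G.EdgeConnected 3) (hcubic : G.Cubic)
    (hf : f ∈ G.cutEdges W) (hy : y ∈ W) (he₀ : e₀ ∈ G.boundaryAt W y) (hne : e₀ ≠ f) :
    ∃ (n : ℕ) (vs : Fin (n + 1) → V) (es : Fin n → E),
      vs 0 = y ∧ G.IsPeripheralPath W f vs es := by
  have hW := ne_univ_of_mem_cutEdges hf
  by_cases hWy : W = {y}
  · subst hWy
    exact ⟨0, _, _, rfl, isPeripheralPath_singleton
      (hG.le_ncard_cutEdges (Set.singleton_nonempty y) hW) he₀ hne⟩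
  have hyW : {y} ⊂ W := (Set.singleton_subset_iff.2 hy).ssubset_of_ne (Ne.symm hWy)
  obtain ⟨w, hw, hfw⟩ := exists_mem_boundaryAt_of_mem_cutEdges hf
  have hyw : y ≠ w := by
    rintro rfl
    exact hne (h.subsingleton_boundaryAt hcubic hyW he₀ hfw)
  obtain ⟨S, hSw, hS, hconn⟩ := h.exists_links_connectedOn hG hcubic hW hw hfw hy he₀ hyw
  obtain ⟨n, vs, es, hpath, rfl, hes, ⟨hlast, e₁, he₁⟩, hends, hinternal⟩ := hS.exists_isPath
  have hmem : ∀ i, vs i ∈ W \ {w} := hpath.mem_of_edgesIn ⟨hy, hyw⟩ fun i => hSw (hes i)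
  refine ⟨n, vs, es, rfl, hpath, fun i => (hmem i).1, fun u hu v hv => ?_,
    ⟨e₀, he₀, e₁, he₁, ?_, hne, ?_⟩, hinternal⟩
  · refine (hconn u hu v hv).mono fun e he => ⟨?_, he.2⟩
    rintro ⟨i, rfl⟩
    exact he.1 (hes i)
  · rintro rfl
    exact hends (eq_of_mem_boundaryAt hlast hy he₁ he₀)
  · rintro rfl
    exact (hmem _).2 (eq_of_mem_boundaryAt hlast hw he₁ hfw)

-- A minimal `K` works: if at most one edge of `G[K]` leaves `A`, then `A` or `K \ A` misses `b`.
theorem Connected.exists_edgeConnectedOn_two_subset [Finite V] [Finite E] (hG : G.Connected)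
    (hf : f ∈ G.cutEdges W) :
    ∃ K ⊆ W, ∃ b ∈ G.cutEdges K,
      G.cutEdges K \ {b} ⊆ G.cutEdges W \ {f} ∧ G.EdgeConnectedOn K 2 := by
  obtain ⟨K, ⟨hKW, b, hb, hcut⟩, hmin⟩ := exists_minimal_of_wellFoundedLT
    (fun K => K ⊆ W ∧ ∃ b ∈ G.cutEdges K, G.cutEdges K \ {b} ⊆ G.cutEdges W \ {f})
    ⟨W, subset_rfl, f, hf, subset_rfl⟩
  refine ⟨K, hKW, b, hb, hcut, edgeConnectedOn_iff_le_ncard_innerCut.2 fun A hAK hA => ?_⟩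
  by_contra! hlt
  obtain ⟨A', hAK', hA', hlt', hbA'⟩ : ∃ A' ⊂ K, A'.Nonempty ∧
      (G.innerCut K A').ncard < 2 ∧ b ∉ G.cutEdges A' := by
    rcases notMem_cutEdges_or_notMem_cutEdges_diff hAK.subset hb with hbA | hbA
    · exact ⟨A, hAK, hA, hlt, hbA⟩
    · exact ⟨K \ A, hAK.subset.sdiff_ssubset_of_nonempty hA, Set.nonempty_of_ssubset hAK,
        innerCut_diff.symm ▸ hlt, hbA⟩
  have houter : G.cutEdges A' \ G.innerCut K A' ⊆ G.cutEdges W \ {f} := by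
    rintro e ⟨he, hinner⟩
    refine hcut ⟨(cutEdges_subset_innerCut_union hAK'.subset he).resolve_left hinner, ?_⟩
    rintro rfl
    exact hbA' he
  suffices ∃ c ∈ G.cutEdges A', G.innerCut K A' ⊆ {c} by
    obtain ⟨c, hc, hsub⟩ := this
    exact hAK'.not_subset (hmin ⟨hAK'.subset.trans hKW, c, hc,
      (Set.sdiff_subset_sdiff_right hsub).trans houter⟩ hAK'.subset)
  obtain hempty | ⟨c, hc⟩ := (Set.ncard_le_one_iff_subsingleton.1
    (Nat.lt_succ_iff.1 hlt')).eq_empty_or_singleton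
  · obtain ⟨c, hc⟩ := hG.nonempty_cutEdges hA' (hAK'.trans_subset (Set.subset_univ K)).ne
    exact ⟨c, hc, hempty.trans_subset (Set.empty_subset _)⟩
  · exact ⟨c, (hc.ge rfl : c ∈ _).1, hc.le⟩

theorem IsPeripheralPath.of_subset {n : ℕ} {vs : Fin (n + 1) → V} {es : Fin n → E}
    (h : G.IsPeripheralPath K b vs es) (hKW : K ⊆ W)
    (hcut : G.cutEdges K \ {b} ⊆ G.cutEdges W \ {f}) (hW : G.ConnectedOn W fun _ => True) :
    G.IsPeripheralPath W f vs es where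
  isPath := h.isPath
  mem i := hKW (h.mem i)
  connectedOn u hu v hv := by
    refine (hW u hu v hv).replace_edges fun e he => ?_
    by_cases heK : e ∈ G.edgesIn K
    · exact (h.connectedOn _ heK.1 _ heK.2).mono fun e he => ⟨he.1, edgesIn_mono hKW he.2⟩
    · refine .of_edge ⟨?_, he.2⟩
      rintro ⟨i, rfl⟩
      exact heK (h.isPath.mem_edgesIn h.mem i)
  exists_boundary_edges := by
    obtain ⟨e₀, he₀, e₁, he₁, hne, hb₀, hb₁⟩ := h.exists_boundary_edges
    have hf₀ := hcut ⟨he₀.1, hb₀⟩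
    have hf₁ := hcut ⟨he₁.1, hb₁⟩
    exact ⟨e₀, ⟨hf₀.1, he₀.2⟩, e₁, ⟨hf₁.1, he₁.2⟩, hne, hf₀.2, hf₁.2⟩
  notMem_attachments i hi₀ hil := fun ⟨_, e, he⟩ =>
    h.notMem_attachments i hi₀ hil ⟨h.mem i, e, boundaryAt_subset hKW (h.mem i) he⟩

theorem ConnectedOn.exists_isPeripheralPath [Finite V] [Finite E]
    (hW : G.ConnectedOn W fun _ => True) (hG : G.EdgeConnected 3) (hcubic : G.Cubic)
    (hf : f ∈ G.cutEdges W) :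
    ∃ (n : ℕ) (vs : Fin (n + 1) → V) (es : Fin n → E), G.IsPeripheralPath W f vs es := by
  obtain ⟨K, hKW, b, hb, hcut, hK⟩ :=
    (hG.connected three_pos).exists_edgeConnectedOn_two_subset hf
  obtain ⟨v, hv, -⟩ := exists_mem_boundaryAt_of_mem_cutEdges hb
  have hthree := hG.le_ncard_cutEdges ⟨v, hv⟩ (ne_univ_of_mem_cutEdges hb)
  obtain ⟨e₀, he₀, hne⟩ := Set.exists_ne_of_one_lt_ncard (show 1 < (G.cutEdges K).ncard by omega) b
  obtain ⟨y, hy, he₀y⟩ := exists_mem_boundaryAt_of_mem_cutEdges he₀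
  obtain ⟨n, vs, es, -, hpath⟩ := hK.exists_isPeripheralPath hG hcubic hb hy he₀y hne
  exact ⟨n, vs, es, hpath.of_subset hKW hcut hW⟩

theorem IsPeripheralPath.joins_component {n : ℕ} {vs : Fin (n + 1) → V} {es : Fin n → E}
    (h : G.IsPeripheralPath W f vs es) (hW : G.IsComponent X W) :
    G.IsPath vs es ∧ (∀ i, vs i ∈ W) ∧ G.ConnectedOn W (fun e => e ∉ Set.range es) ∧
      (∃ e₀ e₁ : E, e₀ ≠ e₁ ∧ e₀ ≠ f ∧ e₁ ≠ f ∧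
        G.joins e₀ (vs 0) X ∧ G.joins e₁ (vs (Fin.last n)) X) ∧
      (∀ i : Fin (n + 1), i ≠ 0 → i ≠ Fin.last n → ∀ e : E, ¬ G.joins e (vs i) X) := by
  obtain ⟨e₀, he₀, e₁, he₁, hne, hf₀, hf₁⟩ := h.exists_boundary_edges
  exact ⟨h.isPath, h.mem, h.connectedOn, ⟨e₀, e₁, hne, hf₀, hf₁, (hW.joins_iff (h.mem _)).2 he₀,
    (hW.joins_iff (h.mem _)).2 he₁⟩, fun i hi₀ hil e he =>
      h.notMem_attachments i hi₀ hil ⟨h.mem i, e, (hW.joins_iff (h.mem i)).1 he⟩⟩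

end PeripheralPaths

end Multigraph

/-- In a 3-edge-connected cubic graph `G`, given a nonempty proper vertex set `X`, a
component `H` of `G − X` (with vertex set `W`) and an edge `f ∈ E(X, V(H))`, there is a
(possibly trivial) path `P ⊆ H` with ends `y₀ = vs 0` and `y₁ = vs (last n)` which is
peripheral in `H`, such that there are distinct edges `e₀ ∈ E(y₀,X) \ {f}` and
`e₁ ∈ E(y₁,X) \ {f}`, and no internal vertex of `P` has a neighbour in `X`.
Moreover, if `H` is 2-edge-connected and `y₀ ∈ V(H)` is prescribed with
`E(y₀,X) \ {f} ≠ ∅`, such a path can be chosen starting at `y₀`. -/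
theorem peripheral_path_lemma {V E : Type} [Fintype V] [Fintype E]
    (G : Multigraph V E) (hG : G.EdgeConnected 3) (hcubic : G.Cubic)
    (X : Set V) (hXne : X.Nonempty) (hXproper : X ≠ Set.univ)
    (W : Set V) (hW : G.IsComponent X W)
    (f : E) (hf : ∃ x ∈ X, ∃ w ∈ W,
      (G.src f = x ∧ G.tgt f = w) ∨ (G.src f = w ∧ G.tgt f = x)) :
    ((∃ (n : ℕ) (vs : Fin (n + 1) → V) (es : Fin n → E),
      G.IsPath vs es ∧ (∀ i, vs i ∈ W) ∧
      G.ConnectedOn W (fun e => e ∉ Set.range es) ∧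
      (∃ e₀ e₁ : E, e₀ ≠ e₁ ∧ e₀ ≠ f ∧ e₁ ≠ f ∧
        G.joins e₀ (vs 0) X ∧ G.joins e₁ (vs (Fin.last n)) X) ∧
      (∀ i : Fin (n + 1), i ≠ 0 → i ≠ Fin.last n → ∀ e : E, ¬ G.joins e (vs i) X)) ∧
    (G.EdgeConnectedOn W 2 →
      ∀ y₀ ∈ W, (∃ e : E, e ≠ f ∧ G.joins e y₀ X) →
      ∃ (n : ℕ) (vs : Fin (n + 1) → V) (es : Fin n → E),
        vs 0 = y₀ ∧ G.IsPath vs es ∧ (∀ i, vs i ∈ W) ∧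
        G.ConnectedOn W (fun e => e ∉ Set.range es) ∧
        (∃ e₀ e₁ : E, e₀ ≠ e₁ ∧ e₀ ≠ f ∧ e₁ ≠ f ∧
          G.joins e₀ (vs 0) X ∧ G.joins e₁ (vs (Fin.last n)) X) ∧
        (∀ i : Fin (n + 1), i ≠ 0 → i ≠ Fin.last n → ∀ e : E, ¬ G.joins e (vs i) X))) := by
  have hfW : f ∈ G.cutEdges W := by
    obtain ⟨x, hx, w, hw, hends⟩ := hf
    have hjoins : G.joins f w X := by
      rcases hends with ⟨rfl, ht⟩ | ⟨hs, rfl⟩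
      · exact .inr ⟨ht, hx⟩
      · exact .inl ⟨hs, hx⟩
    exact ((hW.joins_iff hw).1 hjoins).1
  refine ⟨?_, fun h y₀ hy₀ ⟨e, hef, he⟩ => ?_⟩
  · obtain ⟨n, vs, es, hpath⟩ := hW.connectedOn.exists_isPeripheralPath hG hcubic hfW
    exact ⟨n, vs, es, hpath.joins_component hW⟩
  · obtain ⟨n, vs, es, hy, hpath⟩ :=
      h.exists_isPeripheralPath hG hcubic hfW hy₀ ((hW.joins_iff hy₀).1 he) hef
    exact ⟨n, vs, es, hy, hpath.joins_component hW⟩
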